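/- In the twin prime power construction, the sum of the matrices N_β over all nonzero β ∈ K equals (J_{q+2} − I_{q+2}) ⊗ (q·I_{q²} + J_{q²}). -/

import Mathlib

open Matrix Kronecker BigOperators

noncomputable section

/-- The all-ones matrix. -/
def allOnes (n : Type*) : Matrix n n ℝ := Matrix.of fun _ _ => 1

/-- The auxiliary matrices `C_a` for `a ∈ F ∪ {y}` (formally `Option F`, with `none`
playing the role of the extra symbol `y`, so that `C_y = I_q ⊗ J_q`). -/
def auxC {F : Type*} [Field F] [Fintype F] [DecidableEq F] :
    Option F → Matrix (F × F) (F × F) ℝ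
  | some α => Matrix.of fun p r => if r.2 - p.2 = α * (r.1 - p.1) then 1 else 0
  | none => Matrix.of fun p r => if p.1 = r.1 then 1 else 0

/-- The permutation matrix `P_{β,γ}` with `(a,b)`-entry `1` iff `β·(−a+b) = γ`. -/
def permP {K : Type*} [Field K] [DecidableEq K] (β γ : K) : Matrix K K ℝ :=
  Matrix.of fun a b => if β * (-a + b) = γ then 1 else 0

/-- The matrix `N_β = Σ_{γ∈K∖{0}} P_{β,γ} ⊗ C_{ψ(γ)}` of the twin prime power
construction, where `ψ : K∖{0} → F ∪ {y}` is a fixed bijection. -/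
def NN {F K : Type*} [Field F] [Fintype F] [DecidableEq F]
    [Field K] [Fintype K] [DecidableEq K]
    (ψ : {x : K // x ≠ 0} ≃ Option F) (β : K) :
    Matrix (K × (F × F)) (K × (F × F)) ℝ :=
  ∑ γ : {x : K // x ≠ 0}, permP β (γ : K) ⊗ₖ auxC (ψ γ)

/-!
The classes of `C_a`, `a ∈ F ∪ {y}`, are the parallel classes of lines of the affine plane
over `F`. A point lies on one line of each of the `q + 1` classes and two distinct points lie
on exactly one common line, so `∑ C_a = q I + J`. For `γ ≠ 0` the equation `β (-a + b) = γ`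
in `β` has exactly one solution, which is nonzero, if `a ≠ b` and none if `a = b`. Hence
`∑ P_{β,γ} = J - I` over `β ≠ 0` does not depend on `γ`: it factors out of the sum of the
`P_{β,γ} ⊗ C_{ψ(γ)}`, and the second factor becomes the sum of all `C_a`, since `ψ` is bijective.
-/

section KroneckerSum

variable {ι l m n p R : Type*} [NonUnitalNonAssocSemiring R]

theorem sum_kronecker (s : Finset ι) (A : ι → Matrix l m R) (B : Matrix n p R) :
    (∑ i ∈ s, A i) ⊗ₖ B = ∑ i ∈ s, A i ⊗ₖ B := by
  ext
  simp only [Matrix.kroneckerMap_apply, Matrix.sum_apply, Finset.sum_mul]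

theorem kronecker_sum (A : Matrix l m R) (s : Finset ι) (B : ι → Matrix n p R) :
    A ⊗ₖ (∑ i ∈ s, B i) = ∑ i ∈ s, A ⊗ₖ B i := by
  ext
  simp only [Matrix.kroneckerMap_apply, Matrix.sum_apply, Finset.mul_sum]

end KroneckerSum

theorem sum_ite_mul_eq_of_ne_zero {G M : Type*} [GroupWithZero G] [Fintype G] [DecidableEq G]
    [AddCommMonoid M] {x : G} (hx : x ≠ 0) (y : G) (c : M) :
    ∑ a : G, (if a * x = y then c else 0) = c := by
  simp only [← eq_mul_inv_iff_mul_eq₀ hx, Finset.sum_ite_eq', Finset.mem_univ, if_true]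

section AffinePlane

variable {F : Type*} [Field F] [Fintype F] [DecidableEq F]

theorem sum_auxC_apply_self (p : F × F) :
    ∑ o : Option F, auxC o p p = Fintype.card F + 1 := by
  simp [Fintype.sum_option, auxC, add_comm]

theorem sum_auxC_apply_of_ne {p r : F × F} (h : p ≠ r) : ∑ o : Option F, auxC o p r = 1 := by
  simp only [Fintype.sum_option, auxC, Matrix.of_apply]
  by_cases hfst : p.1 = r.1
  · have hsnd : r.2 - p.2 ≠ 0 := sub_ne_zero.mpr fun e => h (Prod.ext hfst e.symm)
    simp [hfst, hsnd]
  · have unique_slope : ∑ α : F, (if r.2 - p.2 = α * (r.1 - p.1) then (1 : ℝ) else 0) = 1 := by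
      simpa only [eq_comm] using
        sum_ite_mul_eq_of_ne_zero (sub_ne_zero.mpr (Ne.symm hfst)) (r.2 - p.2) (1 : ℝ)
    rw [if_neg hfst, zero_add, unique_slope]

theorem sum_auxC :
    ∑ o : Option F, auxC o =
      (Fintype.card F : ℝ) • (1 : Matrix (F × F) (F × F) ℝ) + allOnes (F × F) := by
  ext p r
  rw [Matrix.sum_apply]
  obtain rfl | h := eq_or_ne p r
  · rw [sum_auxC_apply_self]
    simp [allOnes]
  · rw [sum_auxC_apply_of_ne h]
    simp [allOnes, h]

end AffinePlane

section Permutations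

variable {K : Type*} [Field K] [DecidableEq K] {γ : K}

theorem permP_zero_left (hγ : γ ≠ 0) : permP 0 γ = 0 := by
  ext a b
  simp [permP, hγ.symm]

theorem permP_apply_self (hγ : γ ≠ 0) (β a : K) : permP β γ a a = 0 := by
  simp [permP, hγ.symm]

theorem sum_permP [Fintype K] (hγ : γ ≠ 0) : ∑ β : K, permP β γ = allOnes K - 1 := by
  ext a b
  rw [Matrix.sum_apply]
  obtain rfl | h := eq_or_ne a b
  · simp [permP_apply_self hγ, allOnes]
  · simpa [permP, allOnes, h] using
      sum_ite_mul_eq_of_ne_zero (neg_add_eq_zero.not.mpr h) γ (1 : ℝ)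

theorem sum_permP_ne_zero [Fintype K] (hγ : γ ≠ 0) :
    ∑ β : {x : K // x ≠ 0}, permP (β : K) γ = allOnes K - 1 := by
  rw [← sum_permP hγ, Fintype.sum_eq_add_sum_subtype_ne (fun β => permP β γ) 0,
    permP_zero_left hγ, zero_add]

end Permutations

/-- In the twin prime power construction,
`Σ_{β∈K∖{0}} N_β = (J_{q+2} − I_{q+2}) ⊗ (q·I_{q²} + J_{q²})`. -/
theorem NN_sum {F K : Type*} [Field F] [Fintype F] [DecidableEq F]
    [Field K] [Fintype K] [DecidableEq K]
    (hcard : Fintype.card K = Fintype.card F + 2)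
    (ψ : {x : K // x ≠ 0} ≃ Option F) :
    (∑ β : {x : K // x ≠ 0}, NN ψ (β : K)) =
      (allOnes K - 1) ⊗ₖ
        ((Fintype.card F : ℝ) • (1 : Matrix (F × F) (F × F) ℝ) + allOnes (F × F)) := by
  calc ∑ β : {x : K // x ≠ 0}, NN ψ (β : K)
      = ∑ γ : {x : K // x ≠ 0}, ∑ β : {x : K // x ≠ 0}, permP (β : K) γ ⊗ₖ auxC (ψ γ) :=
        Finset.sum_comm
    _ = ∑ γ : {x : K // x ≠ 0}, (allOnes K - 1) ⊗ₖ auxC (ψ γ) :=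
        Finset.sum_congr rfl fun γ _ => by rw [← sum_kronecker, sum_permP_ne_zero γ.2]
    _ = (allOnes K - 1) ⊗ₖ ∑ o : Option F, auxC o := by
        rw [← kronecker_sum, ψ.sum_comp]
    _ = (allOnes K - 1) ⊗ₖ
          ((Fintype.card F : ℝ) • (1 : Matrix (F × F) (F × F) ℝ) + allOnes (F × F)) := by
        rw [sum_auxC]
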